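/- Let U be a nonzero proper subspace of V, let G = s(V,b)^{(1)}, l = codim_V U, r = dim(U ∩ U^⊥), and t = codim_G N_G(U). Then l + t > n except in the following cases: (a) if l = 1 and r = 0 (i.e. U ∩ U^⊥ = 0), then l + t = n; (b) if l = 1 and r = 1 (i.e. U^⊥ is isotropic), then l + t = n − 1; (c) if l = 2, n = 3, and r = 1 (i.e. U is isotropic), then l + t = n; (d) if l = 2, n = 5, and r = 2, then l + t = n; (e) if l = 2, n = 4, and r = 2 (i.e. U is totally isotropic), then l + t = n − 1; (f) if l = 3, n = 6, and r = 3 (i.e. U is totally isotropic), then l + t = n. -/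

import Mathlib

open Module

/-- The orthogonal complement of a subspace `L` with respect to a bilinear form `b`:
`L^⊥ = {v ∈ V | b(v,w) = 0 for all w ∈ L}`. -/
def perp {K V : Type*} [Field K] [AddCommGroup V] [Module K V]
    (B : V →ₗ[K] V →ₗ[K] K) (L : Submodule K V) : Submodule K V where
  carrier := {v | ∀ w ∈ L, B v w = 0}
  add_mem' := by
    intro a b ha hb w hw
    simp [map_add, LinearMap.add_apply, ha w hw, hb w hw]
  zero_mem' := by
    intro w hw
    simp
  smul_mem' := by
    intro c a ha w hw
    simp [map_smul, LinearMap.smul_apply, ha w hw]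

/-- The Lie algebra `s(V,b)` of endomorphisms preserving the bilinear form `b`
(in characteristic 2, self-adjoint endomorphisms), as a subspace of `End K V`. -/
def sAdj {K V : Type*} [Field K] [AddCommGroup V] [Module K V]
    (B : V →ₗ[K] V →ₗ[K] K) : Submodule K (Module.End K V) where
  carrier := {A | ∀ u v : V, B (A u) v = B u (A v)}
  add_mem' := by
    intro A C hA hC u v
    simp [LinearMap.add_apply, map_add, hA u v, hC u v]
  zero_mem' := by
    intro u v
    simp
  smul_mem' := by
    intro c A hA u v
    simp [LinearMap.smul_apply, map_smul, hA u v]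

/-- The derived subalgebra `s(V,b)⁽¹⁾ = [s(V,b), s(V,b)]`, spanned by
commutators of elements of `s(V,b)`. -/
def sAdjDerived {K V : Type*} [Field K] [AddCommGroup V] [Module K V]
    (B : V →ₗ[K] V →ₗ[K] K) : Submodule K (Module.End K V) :=
  Submodule.span K
    {C : Module.End K V | ∃ A₁ ∈ sAdj B, ∃ A₂ ∈ sAdj B, C = A₁ * A₂ - A₂ * A₁}

/-- Endomorphisms of V leaving the subspace U stable. -/
def stab {K V : Type*} [Field K] [AddCommGroup V] [Module K V]
    (U : Submodule K V) : Submodule K (Module.End K V) where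
  carrier := {A | ∀ u ∈ U, A u ∈ U}
  add_mem' := by
    intro A C hA hC u hu
    simpa [LinearMap.add_apply] using U.add_mem (hA u hu) (hC u hu)
  zero_mem' := by
    intro u hu
    simp
  smul_mem' := by
    intro c A hA u hu
    simpa [LinearMap.smul_apply] using U.smul_mem c (hA u hu)

section Helpers17

variable {K M N V : Type*} [Field K] [AddCommGroup M] [Module K M] [AddCommGroup N] [Module K N]
  [AddCommGroup V] [Module K V]

/-- elementary alternating form -/
def wdg (f g : M →ₗ[K] K) : M →ₗ[K] M →ₗ[K] K :=
  f.smulRight g - g.smulRight f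

lemma wdg_apply (f g : M →ₗ[K] K) (x y : M) : wdg f g x y = f x * g y - g x * f y := by
  simp [wdg]

/-- alternating forms -/
def AltF (K M : Type*) [Field K] [AddCommGroup M] [Module K M] :
    Submodule K (M →ₗ[K] M →ₗ[K] K) where
  carrier := {γ | ∀ x, γ x x = 0}
  add_mem' := by
    intro a b ha hb x
    simp [ha x, hb x]
  zero_mem' := by
    intro x
    simp
  smul_mem' := by
    intro c a ha x
    simp [ha x]

lemma mem_AltF (γ : M →ₗ[K] M →ₗ[K] K) : γ ∈ AltF K M ↔ ∀ x, γ x x = 0 := Iff.rfl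

lemma AltF_neg {γ : M →ₗ[K] M →ₗ[K] K} (h : γ ∈ AltF K M) (x y : M) : γ x y = - γ y x := by
  have h1 := h (x + y)
  have h2 := h x
  have h3 := h y
  simp only [map_add, LinearMap.add_apply, h2, h3] at h1
  linear_combination h1

/-- index type -/
abbrev Idx (r : ℕ) := Σ j : Fin r, Fin j.1

def Idx.i {r : ℕ} (p : Idx r) : Fin r := ⟨p.2.1, p.2.2.trans p.1.2⟩

lemma Idx.lt {r : ℕ} (p : Idx r) : p.i < p.1 := p.2.2

lemma Idx.ext' {r : ℕ} {p q : Idx r} (h : p.i = q.i) (h' : p.1 = q.1) : p = q := by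
  obtain ⟨j, i⟩ := p
  obtain ⟨j', i'⟩ := q
  simp only at h'
  subst h'
  simp only [Idx.i, Fin.mk.injEq] at h
  congr 1
  exact Fin.ext h

lemma card_Idx (r : ℕ) : Fintype.card (Idx r) * 2 = r * (r - 1) := by
  simp only [Idx, Fintype.card_sigma, Fintype.card_fin]
  rw [Fin.sum_univ_eq_sum_range (fun i => i), Finset.sum_range_id_mul_two]

/-- build an alternating form from coordinates -/
noncomputable def mkAlt {r : ℕ} (e : Basis (Fin r) K M) : (Idx r → K) →ₗ[K] (M →ₗ[K] M →ₗ[K] K) where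
  toFun c := ∑ p, c p • wdg (e.coord p.i) (e.coord p.1)
  map_add' c d := by simp [add_smul, Finset.sum_add_distrib]
  map_smul' a c := by simp [mul_smul, Finset.smul_sum]

lemma mkAlt_apply {r : ℕ} (e : Basis (Fin r) K M) (c : Idx r → K) :
    mkAlt e c = ∑ p, c p • wdg (e.coord p.i) (e.coord p.1) := rfl

lemma mkAlt_mem {r : ℕ} (e : Basis (Fin r) K M) (c : Idx r → K) : mkAlt e c ∈ AltF K M := by
  rw [mkAlt_apply]
  refine Submodule.sum_mem _ fun p _ => Submodule.smul_mem _ _ fun x => ?_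
  rw [wdg_apply]; ring

lemma mkAlt_basis {r : ℕ} (e : Basis (Fin r) K M) (c : Idx r → K) (q : Idx r) :
    mkAlt e c (e q.i) (e q.1) = c q := by
  rw [mkAlt_apply]
  simp only [LinearMap.sum_apply, LinearMap.smul_apply, wdg_apply, Basis.coord_apply,
    Basis.repr_self, Finsupp.single_apply]
  rw [Finset.sum_eq_single q]
  · have := q.lt
    simp [this.ne, this.ne']
  · intro p _ hpq
    have h1 := p.lt
    have h2 := q.lt
    have h3 : ¬ (q.i = p.i ∧ q.1 = p.1) := fun h => hpq (Idx.ext' h.1.symm h.2.symm)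
    have h4 : ¬ (q.i = p.1 ∧ q.1 = p.i) := fun h => by
      rw [h.1, h.2] at h2; exact absurd h1 h2.not_gt
    have e1 : (if q.i = p.i then (1 : K) else 0) * (if q.1 = p.1 then 1 else 0) = 0 := by
      split_ifs <;> simp_all
    have e2 : (if q.i = p.1 then (1 : K) else 0) * (if q.1 = p.i then 1 else 0) = 0 := by
      split_ifs <;> simp_all
    rw [e1, e2]
    simp
  · simp

lemma alt_ext {r : ℕ} (e : Basis (Fin r) K M) {γ δ : M →ₗ[K] M →ₗ[K] K}
    (hγ : γ ∈ AltF K M) (hδ : δ ∈ AltF K M)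
    (h : ∀ q : Idx r, γ (e q.i) (e q.1) = δ (e q.i) (e q.1)) : γ = δ := by
  have key : ∀ i j : Fin r, i < j → γ (e i) (e j) = δ (e i) (e j) := fun i j hij =>
    h ⟨j, ⟨i.1, hij⟩⟩
  refine e.ext fun i => e.ext fun j => ?_
  rcases lt_trichotomy i j with hij | hij | hij
  · exact key i j hij
  · subst hij; rw [hγ, hδ]
  · rw [AltF_neg hγ, AltF_neg hδ, key j i hij]

lemma alt_eq {r : ℕ} (e : Basis (Fin r) K M) {γ : M →ₗ[K] M →ₗ[K] K}
    (hγ : γ ∈ AltF K M) : γ = mkAlt e (fun q => γ (e q.i) (e q.1)) :=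
  alt_ext e hγ (mkAlt_mem _ _) fun q => by rw [mkAlt_basis]

lemma finrank_AltF [FiniteDimensional K M] :
    finrank K (AltF K M) * 2 = finrank K M * (finrank K M - 1) := by
  rw [← card_Idx, ← Module.finrank_fintype_fun_eq_card K]
  congr 1
  let e := Module.finBasis K M
  symm
  apply LinearEquiv.finrank_eq
  refine LinearEquiv.ofBijective ((mkAlt e).codRestrict (AltF K M) (mkAlt_mem e)) ⟨?_, ?_⟩
  · intro c d h
    have h' : mkAlt e c = mkAlt e d := congrArg Subtype.val h
    funext q
    rw [← mkAlt_basis e c q, h', mkAlt_basis]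
  · intro γ
    exact ⟨_, Subtype.ext (alt_eq e γ.2).symm⟩

/-- restriction of a bilinear map -/
def resBil (R U W : Submodule K V) (hU : R ≤ U) (hW : R ≤ W) :
    (U →ₗ[K] W →ₗ[K] K) →ₗ[K] (R →ₗ[K] R →ₗ[K] K) where
  toFun β := β.compl₁₂ (Submodule.inclusion hU) (Submodule.inclusion hW)
  map_add' a b := by ext; simp
  map_smul' a b := by ext; simp

lemma resBil_apply (R U W : Submodule K V) (hU : R ≤ U) (hW : R ≤ W) (β : U →ₗ[K] W →ₗ[K] K)
    (x y : R) : resBil R U W hU hW β x y =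
      β (Submodule.inclusion hU x) (Submodule.inclusion hW y) := rfl

lemma resBil_surj (R U W : Submodule K V) (hU : R ≤ U) (hW : R ≤ W) :
    Function.Surjective (resBil R U W hU hW) := by
  intro γ
  obtain ⟨p, hp⟩ := (Submodule.inclusion hU).exists_leftInverse_of_injective
    (LinearMap.ker_eq_bot.2 (Submodule.inclusion_injective hU))
  obtain ⟨q, hq⟩ := (Submodule.inclusion hW).exists_leftInverse_of_injective
    (LinearMap.ker_eq_bot.2 (Submodule.inclusion_injective hW))
  refine ⟨γ.compl₁₂ p q, ?_⟩
  refine LinearMap.ext fun x => LinearMap.ext fun y => ?_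
  have h1 := LinearMap.congr_fun hp x
  have h2 := LinearMap.congr_fun hq y
  simp only [LinearMap.comp_apply, LinearMap.id_apply] at h1 h2
  rw [resBil_apply, LinearMap.compl₁₂_apply, h1, h2]

lemma finrank_comap_surj [FiniteDimensional K M] [FiniteDimensional K N]
    (f : M →ₗ[K] N) (hf : Function.Surjective f) (S : Submodule K N) :
    finrank K (S.comap f) + finrank K N = finrank K M + finrank K S := by
  have h1 := f.finrank_range_add_finrank_ker
  rw [LinearMap.range_eq_top.2 hf, finrank_top] at h1
  have h2 := (f.domRestrict (S.comap f)).finrank_range_add_finrank_ker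
  rw [LinearMap.range_domRestrict, Submodule.map_comap_eq_of_surjective hf,
    LinearMap.ker_domRestrict] at h2
  have h3 : finrank K ((LinearMap.ker f).comap (S.comap f).subtype) = finrank K (LinearMap.ker f) := by
    apply LinearEquiv.finrank_eq
    refine Submodule.comapSubtypeEquivOfLe ?_
    intro x hx
    rw [LinearMap.mem_ker] at hx
    simp [hx]
  have h4 : finrank K ((LinearMap.ker f).submoduleOf (S.comap f)) = finrank K (LinearMap.ker f) := h3
  omega

lemma finrank_map_add_inf [FiniteDimensional K M]
    (f : M →ₗ[K] N) (S T : Submodule K M) (hT : S ⊓ LinearMap.ker f = S ⊓ T) :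
    finrank K (S.map f) + finrank K ↥(S ⊓ T) = finrank K S := by
  have h1 := (f.domRestrict S).finrank_range_add_finrank_ker
  rw [LinearMap.range_domRestrict] at h1
  have h2 : finrank K ↥((LinearMap.ker (f.domRestrict S)).map S.subtype)
      = finrank K (LinearMap.ker (f.domRestrict S)) := Submodule.finrank_map_subtype_eq _ _
  have h3 : (LinearMap.ker (f.domRestrict S)).map S.subtype = S ⊓ LinearMap.ker f := by
    ext x
    simp [and_comm]
  rw [h3, hT] at h2
  omega

lemma glue (U W : Submodule K V) (f : U →ₗ[K] M) (g : W →ₗ[K] M)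
    (h : ∀ (x : U) (y : W), (x : V) = y → f x = g y) :
    ∃ F : V →ₗ[K] M, (∀ x : U, F x = f x) ∧ ∀ y : W, F y = g y := by
  let s := LinearPMap.sup ⟨U, f⟩ ⟨W, g⟩ h
  obtain ⟨F, hF⟩ := s.toFun.exists_extend
  refine ⟨F, fun x => ?_, fun y => ?_⟩
  · have h1 := (LinearPMap.left_le_sup ⟨U, f⟩ ⟨W, g⟩ h)
    have h2 := h1.2 (x := x) (y := ⟨x, h1.1 x.2⟩) rfl
    exact (LinearMap.congr_fun hF ⟨x, h1.1 x.2⟩).trans h2.symm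
  · have h1 := (LinearPMap.right_le_sup ⟨U, f⟩ ⟨W, g⟩ h)
    have h2 := h1.2 (x := y) (y := ⟨y, h1.1 y.2⟩) rfl
    exact (LinearMap.congr_fun hF ⟨y, h1.1 y.2⟩).trans h2.symm

lemma extend_alt (U W : Submodule K V) (β : U →ₗ[K] W →ₗ[K] K)
    (hβ : ∀ (x : V) (hU : x ∈ U) (hW : x ∈ W), β ⟨x, hU⟩ ⟨x, hW⟩ = 0) :
    ∃ γ ∈ AltF K V, ∀ (x : U) (y : W), γ x y = β x y := by
  obtain ⟨π, hπ⟩ := (LinearMap.id : (U ⊓ W : Submodule K V) →ₗ[K] _).exists_extend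
  have hπ' : ∀ x (hx : x ∈ U ⊓ W), π x = ⟨x, hx⟩ := fun x hx => LinearMap.congr_fun hπ ⟨x, hx⟩
  let iU := Submodule.inclusion (inf_le_left : U ⊓ W ≤ U)
  let iW := Submodule.inclusion (inf_le_right : U ⊓ W ≤ W)
  obtain ⟨p, hp1, hp2⟩ := glue U W LinearMap.id (iU ∘ₗ π ∘ₗ W.subtype) (by
    intro x y hxy
    have hx : (y : V) ∈ U ⊓ W := ⟨hxy ▸ x.2, y.2⟩
    apply Subtype.ext
    simp [hπ' _ hx, iU, hxy])
  obtain ⟨q, hq1, hq2⟩ := glue U W (iW ∘ₗ π ∘ₗ U.subtype) LinearMap.id (by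
    intro x y hxy
    have hx : (x : V) ∈ U ⊓ W := ⟨x.2, hxy ▸ y.2⟩
    apply Subtype.ext
    simp [hπ' _ hx, iW, ← hxy])
  let δ : V →ₗ[K] V →ₗ[K] K := β.compl₁₂ p q
  let ρ : V →ₗ[K] V →ₗ[K] K := β.compl₁₂ (iU ∘ₗ π) (iW ∘ₗ π)
  have hρ : ρ ∈ AltF K V := fun x => hβ (π x) (π x).2.1 (π x).2.2
  refine ⟨δ - δ.flip - ρ, ?_, ?_⟩
  · intro x
    have := hρ x
    simp [this]
  · intro x y
    have h := AltF_neg hρ x y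
    have h1 : δ x y = β x y := by simp [δ, hp1, hq2]
    have h2 : δ y x = ρ y x := by simp [δ, ρ, hp2, hq1]
    simp only [LinearMap.sub_apply, LinearMap.flip_apply, h1, h2, h]
    ring

variable (B : V →ₗ[K] V →ₗ[K] K)

lemma B_surj [FiniteDimensional K V] (hnd : ∀ v : V, (∀ w : V, B v w = 0) → v = 0) : Function.Surjective B := by
  have hinj : Function.Injective B := by
    rw [← LinearMap.ker_eq_bot, LinearMap.ker_eq_bot']
    intro v hv
    exact hnd v fun w => by rw [hv]; rfl
  exact (LinearMap.injective_iff_surjective_of_finrank_eq_finrank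
    (Subspace.dual_finrank_eq (K := K) (V := V)).symm).1 hinj

/-- wedge endomorphism -/
def wE (u v : V) : Module.End K V := (B u).smulRight v - (B v).smulRight u

lemma wE_apply (u v x : V) : wE B u v x = B u x • v - B v x • u := by simp [wE]

lemma wE_mem_of_ne (hsymm : ∀ u v : V, B u v = B v u) (u v : V) (h : B u v ≠ 0) :
    wE B u v ∈ sAdjDerived B := by
  have hS : ∀ u, (B u).smulRight u ∈ sAdj B := by
    intro u x y
    simp [hsymm x u, mul_comm]
  have hc : ((B v).smulRight v : Module.End K V) * (B u).smulRight u
      - (B u).smulRight u * (B v).smulRight v ∈ sAdjDerived B :=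
    Submodule.subset_span ⟨_, hS v, _, hS u, rfl⟩
  have : wE B u v = (B u v)⁻¹ • (((B v).smulRight v : Module.End K V) * (B u).smulRight u
      - (B u).smulRight u * (B v).smulRight v) := by
    rw [eq_inv_smul_iff₀ h]
    ext x
    simp [wE_apply, hsymm v u, smul_sub, smul_smul, mul_comm]
  rw [this]
  exact Submodule.smul_mem _ _ hc

lemma wE_mem (hsymm : ∀ u v : V, B u v = B v u)
    (hnd : ∀ v : V, (∀ w : V, B v w = 0) → v = 0) (u v : V) :
    wE B u v ∈ sAdjDerived B := by
  by_cases h : B u v = 0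
  · by_cases hu : u = 0
    · have : wE B u v = 0 := by ext x; simp [wE_apply, hu]
      rw [this]; exact Submodule.zero_mem _
    · have : ∃ w, B u w ≠ 0 := by
        by_contra! hc
        exact hu (hnd u hc)
      obtain ⟨w, hw⟩ := this
      have h1 : wE B u v = wE B u (v + w) - wE B u w := by
        ext x
        simp only [wE_apply, add_smul, smul_add, map_add, LinearMap.add_apply, LinearMap.sub_apply]
        abel
      rw [h1]
      exact Submodule.sub_mem _ (wE_mem_of_ne B hsymm _ _ (by simpa [h] using hw))
        (wE_mem_of_ne B hsymm _ _ hw)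
  · exact wE_mem_of_ne B hsymm u v h

lemma derived_alt (hsymm : ∀ u v : V, B u v = B v u) {A : Module.End K V}
    (hA : A ∈ sAdjDerived B) : B ∘ₗ A ∈ AltF K V := by
  induction hA using Submodule.span_induction with
  | mem A h =>
    obtain ⟨A₁, h₁, A₂, h₂, rfl⟩ := h
    intro x
    have e1 := h₁ (A₂ x) x
    have e2 := h₂ (A₁ x) x
    simp only [LinearMap.comp_apply, LinearMap.sub_apply, map_sub, Module.End.mul_apply, e1, e2]
    rw [hsymm, sub_self]
  | zero => intro x; simp
  | add A C _ _ hA hC => 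
    rw [LinearMap.comp_add]; exact Submodule.add_mem _ hA hC
  | smul a A _ hA => 
    rw [LinearMap.comp_smul]; exact Submodule.smul_mem _ _ hA

lemma alt_derived [FiniteDimensional K V] (hsymm : ∀ u v : V, B u v = B v u)
    (hnd : ∀ v : V, (∀ w : V, B v w = 0) → v = 0) {γ : V →ₗ[K] V →ₗ[K] K}
    (hγ : γ ∈ AltF K V) : ∃ A ∈ sAdjDerived B, B ∘ₗ A = γ := by
  choose d hd using B_surj B hnd
  let e := Module.finBasis K V
  refine ⟨∑ p : Idx (finrank K V), γ (e p.i) (e p.1) • wE B (d (e.coord p.i)) (d (e.coord p.1)),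
    Submodule.sum_mem _ fun p _ => Submodule.smul_mem _ _ (wE_mem B hsymm hnd _ _), ?_⟩
  conv_rhs => rw [alt_eq e hγ, mkAlt_apply]
  refine LinearMap.ext fun x => LinearMap.ext fun y => ?_
  simp only [LinearMap.comp_apply, LinearMap.sum_apply, map_sum, LinearMap.smul_apply, map_smul,
    wE_apply, wdg_apply, map_sub, LinearMap.sub_apply, hd]
  rfl

/-- the restriction map -/
def phi (U W : Submodule K V) : Module.End K V →ₗ[K] (U →ₗ[K] W →ₗ[K] K) where
  toFun A := (B ∘ₗ A).compl₁₂ U.subtype W.subtype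
  map_add' A C := by ext; simp
  map_smul' a A := by ext; simp

lemma phi_apply (U W : Submodule K V) (A : Module.End K V) (x : U) (y : W) :
    phi B U W A x y = B (A x) y := rfl

lemma map_phi [FiniteDimensional K V] (hsymm : ∀ u v : V, B u v = B v u)
    (hnd : ∀ v : V, (∀ w : V, B v w = 0) → v = 0) (U W : Submodule K V) :
    (sAdjDerived B).map (phi B U W) =
      (AltF K (U ⊓ W : Submodule K V)).comap (resBil _ U W inf_le_left inf_le_right) := by
  ext β
  rw [Submodule.mem_map, Submodule.mem_comap]
  constructor
  · rintro ⟨A, hA, rfl⟩ x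
    exact derived_alt B hsymm hA x
  · intro hβ
    obtain ⟨γ, hγ, h⟩ := extend_alt U W β (fun x h1 h2 => hβ ⟨x, h1, h2⟩)
    obtain ⟨A, hA, hAγ⟩ := alt_derived B hsymm hnd hγ
    refine ⟨A, hA, LinearMap.ext fun x => LinearMap.ext fun y => ?_⟩
    rw [phi_apply, ← h, ← hAγ]; rfl

lemma perp_facts [FiniteDimensional K V] (hsymm : ∀ u v : V, B u v = B v u)
    (hnd : ∀ v : V, (∀ w : V, B v w = 0) → v = 0) (U : Submodule K V) :
    finrank K (perp B U) = finrank K V - finrank K U ∧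
    ∀ x, (∀ w ∈ perp B U, B x w = 0) → x ∈ U := by
  have hrefl : LinearMap.IsRefl B := fun x y h => by rw [hsymm]; exact h
  have hnd' : LinearMap.BilinForm.Nondegenerate B :=
    ⟨hnd, fun v h => hnd v fun w => by rw [hsymm]; exact h w⟩
  have hp : perp B U = LinearMap.BilinForm.orthogonal B U := by
    ext x
    exact forall₂_congr fun w hw => by rw [hsymm]
  constructor
  · rw [hp, LinearMap.BilinForm.finrank_orthogonal hnd']
  · intro x hx
    rw [← LinearMap.BilinForm.orthogonal_orthogonal hnd' hrefl U, ← hp]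
    intro w hw
    have := hx w hw
    rw [hsymm] at this
    exact this

lemma main_dim [FiniteDimensional K V] (hsymm : ∀ u v : V, B u v = B v u)
    (hnd : ∀ v : V, (∀ w : V, B v w = 0) → v = 0) (U : Submodule K V) (r t l : ℕ)
    (hl : l = finrank K V - finrank K ↥U)
    (hr : r = finrank K ↥(U ⊓ perp B U))
    (ht : t = finrank K ↥(sAdjDerived B)
            - finrank K ↥(sAdjDerived B ⊓ stab U)) :
    2 * t + r * (r + 1) = 2 * (finrank K U * l) := by
  obtain ⟨hp, hpp⟩ := perp_facts B hsymm hnd U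
  have h1 := finrank_map_add_inf (M := Module.End K V) (N := U →ₗ[K] perp B U →ₗ[K] K)
    (phi B U (perp B U)) (sAdjDerived B) (stab U) (by
      congr 1
      ext A
      rw [LinearMap.mem_ker]
      constructor
      · intro h u hu
        exact hpp _ fun w hw => LinearMap.congr_fun (LinearMap.congr_fun h ⟨u, hu⟩) ⟨w, hw⟩
      · intro h
        refine LinearMap.ext fun u => LinearMap.ext fun w => ?_
        rw [phi_apply, hsymm]
        exact w.2 _ (h u u.2))
  rw [map_phi B hsymm hnd] at h1
  have h2 := finrank_comap_surj (M := U →ₗ[K] perp B U →ₗ[K] K)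
    (N := ↥(U ⊓ perp B U) →ₗ[K] ↥(U ⊓ perp B U) →ₗ[K] K) (resBil _ U (perp B U) inf_le_left inf_le_right)
    (resBil_surj _ _ _ _ _) (AltF K (U ⊓ perp B U : Submodule K V))
  have h3 := finrank_AltF (K := K) (M := (U ⊓ perp B U : Submodule K V))
  simp only [Module.finrank_linearMap, Module.finrank_self, mul_one, ← hr, hp, ← hl] at h2 h3
  have h5 : r * (r - 1) + r = r * r := by
    cases r with
    | zero => rfl
    | succ k => simp; ring
  have h6 : r * (r + 1) = r * r + r := by ring
  omega

lemma arith (n m l r t : ℕ) (hm : 0 < m) (hl : 0 < l) (hn : n = l + m) (hrl : r ≤ l) (hrm : r ≤ m)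
    (h : 2 * t + r * (r + 1) = 2 * (m * l)) :
    ((l = 1 ∧ r = 0) → l + t = n) ∧
    ((l = 1 ∧ r = 1) → l + t = n - 1) ∧
    ((l = 2 ∧ n = 3 ∧ r = 1) → l + t = n) ∧
    ((l = 2 ∧ n = 5 ∧ r = 2) → l + t = n) ∧
    ((l = 2 ∧ n = 4 ∧ r = 2) → l + t = n - 1) ∧
    ((l = 3 ∧ n = 6 ∧ r = 3) → l + t = n) ∧
    (¬ ((l = 1 ∧ r = 0) ∨ (l = 1 ∧ r = 1) ∨ (l = 2 ∧ n = 3 ∧ r = 1) ∨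
        (l = 2 ∧ n = 5 ∧ r = 2) ∨ (l = 2 ∧ n = 4 ∧ r = 2) ∨
        (l = 3 ∧ n = 6 ∧ r = 3)) → n < l + t) := by
  by_cases h4 : l ≤ 3
  · interval_cases l <;> interval_cases r <;> omega
  · push Not at h4
    refine ⟨by omega, by omega, by omega, by omega, by omega, by omega, fun _ => ?_⟩
    rcases Nat.eq_zero_or_pos r with rfl | hr
    · nlinarith
    · nlinarith [Nat.mul_le_mul hrm (le_refl (l-1)), Nat.mul_le_mul hrm hrl]

end Helpers17

/-- Lemma 3.3(2): for a nonzero proper subspace U of V, with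
G = s(V,b)⁽¹⁾, l = codim U, r = dim(U ∩ U^⊥) and t = codim of N_G(U) in G,
l + t > n except for the listed exceptional cases (a)–(f). -/
theorem statement17 {K V : Type*} [Field K] [AddCommGroup V] [Module K V]
    [FiniteDimensional K V] [CharP K 2] [PerfectField K]
    (B : V →ₗ[K] V →ₗ[K] K)
    (hsymm : ∀ u v : V, B u v = B v u)
    (hnd : ∀ v : V, (∀ w : V, B v w = 0) → v = 0)
    (hna : ∃ v : V, B v v ≠ 0)
    (U : Submodule K V) (hUbot : U ≠ ⊥) (hUtop : U ≠ ⊤)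
    (n l r t : ℕ)
    (hn : n = finrank K V)
    (hl : l = finrank K V - finrank K ↥U)
    (hr : r = finrank K ↥(U ⊓ perp B U))
    (ht : t = finrank K ↥(sAdjDerived B)
            - finrank K ↥(sAdjDerived B ⊓ stab U)) :
    ((l = 1 ∧ r = 0) → l + t = n) ∧
    ((l = 1 ∧ r = 1) → l + t = n - 1) ∧
    ((l = 2 ∧ n = 3 ∧ r = 1) → l + t = n) ∧
    ((l = 2 ∧ n = 5 ∧ r = 2) → l + t = n) ∧
    ((l = 2 ∧ n = 4 ∧ r = 2) → l + t = n - 1) ∧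
    ((l = 3 ∧ n = 6 ∧ r = 3) → l + t = n) ∧
    (¬ ((l = 1 ∧ r = 0) ∨ (l = 1 ∧ r = 1) ∨ (l = 2 ∧ n = 3 ∧ r = 1) ∨
        (l = 2 ∧ n = 5 ∧ r = 2) ∨ (l = 2 ∧ n = 4 ∧ r = 2) ∨
        (l = 3 ∧ n = 6 ∧ r = 3)) → n < l + t) := by
  obtain ⟨hp, -⟩ := perp_facts B hsymm hnd U
  have h1 : 0 < finrank K U := by
    rw [Module.finrank_pos_iff, Submodule.nontrivial_iff_ne_bot]; exact hUbot
  have h2 : finrank K U < finrank K V := Submodule.finrank_lt hUtop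
  refine arith n (finrank K U) l r t h1 (by omega) (by omega) ?_ ?_
    (main_dim B hsymm hnd U r t l hl hr ht)
  · rw [hr, hl, ← hp]
    exact Submodule.finrank_mono inf_le_right
  · rw [hr]
    exact Submodule.finrank_mono inf_le_left
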